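/- arXiv:2102.12192 — 6 statements merged into one kernel-verified Lean document; each statement's English description precedes it below -/
import Mathlib

section
/- Let l_1, …, l_N : ℝ^d → ℝ be differentiable and β-smooth (β > 0), let η > 0, and let (θ_t, p_t) be the MR-GD iterates with gradient step size α = 1/β. Then for every t ≥ 0, Σ_{i=1}^N p_{t+1,i} l_i(θ_{t+1}) − Σ_{i=1}^N p_{t,i} l_i(θ_t) ≤ −(1/(2β)) ‖Σ_{i=1}^N p_{t,i} ∇l_i(θ_t)‖², i.e., the weighted loss decreases by at least (1/(2β)) times the squared norm of the weighted gradient. -/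
open Real Finset

/-!
Write `F = ∑ i, p t i • l i` for the loss weighted by the current weights. It is `β`-smooth, so the
gradient step of size `1 / β`, which is a gradient step for `F`, decreases `F` by at least
`‖∇F‖² / (2β)`. Multiplying the weights by `exp (-η l i (θ (t + 1)))` then tilts them towards
small losses: the tilt is a decreasing function of the loss, so by the weighted Chebyshev sum
inequality the mean loss at `θ (t + 1)` does not increase.
-/

section Chebyshev

variable {ι R : Type*} [CommRing R] [LinearOrder R] [IsStrictOrderedRing R]

theorem sum_weight_mul_sum_mul_le_of_antivaryOn {s : Finset ι} {w f g : ι → R}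
    (hw : ∀ i ∈ s, 0 ≤ w i) (hfg : AntivaryOn f g s) :
    (∑ i ∈ s, w i) * ∑ i ∈ s, w i * (f i * g i) ≤
      (∑ i ∈ s, w i * f i) * ∑ i ∈ s, w i * g i := by
  have symmetrized :
      (∑ i ∈ s, w i) * (∑ i ∈ s, w i * (f i * g i)) +
          (∑ i ∈ s, w i * (f i * g i)) * ∑ i ∈ s, w i ≤
        (∑ i ∈ s, w i * f i) * (∑ i ∈ s, w i * g i) +
          (∑ i ∈ s, w i * g i) * ∑ i ∈ s, w i * f i := by
    simp_rw [sum_mul_sum, ← sum_add_distrib]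
    refine sum_le_sum fun i hi ↦ sum_le_sum fun j hj ↦ ?_
    have pair : w i * w j * ((f j - f i) * (g j - g i)) ≤ 0 :=
      mul_nonpos_of_nonneg_of_nonpos (mul_nonneg (hw i hi) (hw j hj))
        (hfg.sub_mul_sub_nonpos hi hj)
    linear_combination pair
  linarith

end Chebyshev

section ExpWeights

variable {ι : Type*} [Fintype ι] {η : ℝ} {w a b : ι → ℝ}

/-- The exponential (multiplicative-weights) update with step size `η`: the weights `w` are
multiplied by `exp (-η * a i)`, where `a` is the vector of losses, and normalized to sum to `1`.
The initial weights `w` need not be normalized, but should satisfy `0 < w` in the pointwise order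
(nonnegative, not identically zero): for `w = 0`, division by `0` gives the zero vector. -/
noncomputable def expWeights (η : ℝ) (w a : ι → ℝ) (i : ι) : ℝ :=
  w i * exp (-η * a i) / ∑ j, w j * exp (-η * a j)

theorem sum_mul_exp_pos (hw : 0 < w) : 0 < ∑ i, w i * exp (-η * a i) := by
  obtain ⟨hw_nonneg, i, hi⟩ := Pi.lt_def.1 hw
  exact sum_pos' (fun j _ ↦ mul_nonneg (hw_nonneg j) (exp_pos _).le)
    ⟨i, mem_univ i, mul_pos hi (exp_pos _)⟩

theorem expWeights_mem_stdSimplex (hw : 0 < w) : expWeights η w a ∈ stdSimplex ℝ ι := by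
  have hZ : 0 < ∑ i, w i * exp (-η * a i) := sum_mul_exp_pos hw
  refine ⟨fun i ↦ div_nonneg (mul_nonneg (hw.le i) (exp_pos _).le) hZ.le, ?_⟩
  simp_rw [expWeights]
  rw [← sum_div, div_self hZ.ne']

theorem expWeights_expWeights (hw : 0 < w) :
    expWeights η (expWeights η w a) b = expWeights η w (a + b) := by
  have hZ : ∑ i, w i * exp (-η * a i) ≠ 0 := (sum_mul_exp_pos hw).ne'
  have numerator (i : ι) : expWeights η w a i * exp (-η * b i) =
      w i * exp (-η * (a + b) i) / ∑ j, w j * exp (-η * a j) := by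
    rw [expWeights, Pi.add_apply, mul_add, exp_add]
    ring
  ext i
  rw [expWeights]
  simp_rw [numerator]
  rw [← sum_div, div_div_div_cancel_right₀ hZ, expWeights]

theorem sum_expWeights_mul_le (hη : 0 ≤ η) (hw : w ∈ stdSimplex ℝ ι) :
    ∑ i, expWeights η w a i * a i ≤ ∑ i, w i * a i := by
  have hw_pos : 0 < w := (Fintype.sum_pos_iff_of_nonneg hw.1).1 (hw.2 ▸ one_pos)
  have antitone_tilt : Antitone fun x : ℝ ↦ exp (-η * x) := fun x y hxy ↦
    exp_le_exp.2 (mul_le_mul_of_nonpos_left hxy (neg_nonpos.2 hη))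
  have antivary : Antivary (fun i ↦ exp (-η * a i)) a :=
    (monovary_self a).comp_antitone_left antitone_tilt
  have chebyshev := sum_weight_mul_sum_mul_le_of_antivaryOn (s := univ) (fun i _ ↦ hw.1 i)
    (antivary.antivaryOn _)
  rw [hw.2, one_mul] at chebyshev
  simp_rw [expWeights, div_mul_eq_mul_div, mul_assoc]
  rw [← sum_div]
  exact (div_le_iff₀' (sum_mul_exp_pos hw_pos)).2 chebyshev

end ExpWeights

section Taylor

variable {E F : Type*} [NormedAddCommGroup E] [NormedSpace ℝ E]
  [NormedAddCommGroup F] [NormedSpace ℝ F]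

theorem norm_image_sub_sub_le_of_norm_fderiv_sub_le_segment {f : E → F} {f' : E → E →L[ℝ] F}
    {β : ℝ} {x y : E} (hf : ∀ z ∈ segment ℝ x y, HasFDerivAt f (f' z) z)
    (hf' : ∀ z ∈ segment ℝ x y, ‖f' z - f' x‖ ≤ β * ‖z - x‖) :
    ‖f y - f x - f' x (y - x)‖ ≤ β / 2 * ‖y - x‖ ^ 2 := by
  let γ : ℝ → E := AffineMap.lineMap x y
  have hγ {s : ℝ} (hs : s ∈ Set.Icc 0 1) : γ s ∈ segment ℝ x y :=
    segment_eq_image_lineMap ℝ x y ▸ Set.mem_image_of_mem _ hs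
  have hderiv (s : ℝ) (hs : s ∈ Set.Icc 0 1) :
      HasDerivAt (fun s ↦ f (γ s) - f x - s • f' x (y - x)) ((f' (γ s) - f' x) (y - x)) s := by
    have hγ_deriv : HasDerivAt γ (y - x) s := AffineMap.hasDerivAt_lineMap
    simpa only [one_smul, ← sub_apply, Function.comp_apply] using
      (((hf _ (hγ hs)).comp_hasDerivAt s hγ_deriv).sub_const (f x)).fun_sub
        ((hasDerivAt_id' s).smul_const (f' x (y - x)))
  have hbound (s : ℝ) (hs : s ∈ Set.Icc 0 1) :
      ‖(f' (γ s) - f' x) (y - x)‖ ≤ β * ‖y - x‖ ^ 2 * s :=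
    calc ‖(f' (γ s) - f' x) (y - x)‖
      _ ≤ β * ‖γ s - x‖ * ‖y - x‖ :=
        ((f' (γ s) - f' x).le_opNorm _).trans (by gcongr; exact hf' _ (hγ hs))
      _ = β * ‖y - x‖ ^ 2 * s := by
        rw [show γ s - x = s • (y - x) by simp [γ, AffineMap.lineMap_apply], norm_smul,
          Real.norm_of_nonneg hs.1]
        ring
  have hB (s : ℝ) :
      HasDerivAt (fun s ↦ β / 2 * ‖y - x‖ ^ 2 * s ^ 2) (β * ‖y - x‖ ^ 2 * s) s :=
    ((hasDerivAt_pow 2 s).const_mul _).congr_deriv (by push_cast; ring)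
  simpa [γ] using image_norm_le_of_norm_deriv_right_le_deriv_boundary
    (fun s hs ↦ (hderiv s hs).continuousAt.continuousWithinAt)
    (fun s hs ↦ (hderiv s (Set.Ico_subset_Icc_self hs)).hasDerivWithinAt)
    (by simp [γ]) hB
    (fun s hs ↦ hbound s (Set.Ico_subset_Icc_self hs))
    (Set.right_mem_Icc.2 zero_le_one)

end Taylor

section Gradient

variable {E : Type*} [NormedAddCommGroup E] [InnerProductSpace ℝ E] [CompleteSpace E]

theorem image_le_add_inner_gradient_add_sq {f : E → ℝ} {f' : E → E} {β : ℝ}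
    (hf : ∀ x, HasGradientAt f (f' x) x) (hf' : ∀ x y, ‖f' x - f' y‖ ≤ β * ‖x - y‖) (x y : E) :
    f y ≤ f x + inner ℝ (f' x) (y - x) + β / 2 * ‖y - x‖ ^ 2 := by
  have taylor := norm_image_sub_sub_le_of_norm_fderiv_sub_le_segment (x := x) (y := y)
    (fun z _ ↦ (hf z).hasFDerivAt)
    (fun z _ ↦ by simpa only [← map_sub, LinearIsometryEquiv.norm_map] using hf' z x)
  rw [InnerProductSpace.toDual_apply_apply] at taylor
  linarith [le_norm_self (f y - f x - inner ℝ (f' x) (y - x))]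

theorem image_gradient_step_le {f : E → ℝ} {f' : E → E} {β : ℝ} (hβ : 0 < β)
    (hf : ∀ x, HasGradientAt f (f' x) x) (hf' : ∀ x y, ‖f' x - f' y‖ ≤ β * ‖x - y‖) (x : E) :
    f (x - (1 / β) • f' x) ≤ f x - 1 / (2 * β) * ‖f' x‖ ^ 2 := by
  refine (image_le_add_inner_gradient_add_sq hf hf' x _).trans_eq ?_
  rw [sub_sub_cancel_left, inner_neg_right, real_inner_smul_right, real_inner_self_eq_norm_sq,
    norm_neg, norm_smul, Real.norm_of_nonneg (one_div_pos.2 hβ).le]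
  field

variable {ι : Type*} [Fintype ι]

theorem hasGradientAt_sum_mul {f : ι → E → ℝ} {f' : ι → E} {x : E} (w : ι → ℝ)
    (hf : ∀ i, HasGradientAt (f i) (f' i) x) :
    HasGradientAt (fun y ↦ ∑ i, w i * f i y) (∑ i, w i • f' i) x := by
  rw [hasGradientAt_iff_hasFDerivAt, map_sum]
  simpa only [map_smul] using HasFDerivAt.fun_sum fun i _ ↦ (hf i).hasFDerivAt.const_mul (w i)

theorem norm_sum_smul_sub_sum_smul_le {V : Type*} [SeminormedAddCommGroup V] [NormedSpace ℝ V]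
    {w : ι → ℝ} {u v : ι → V} {C : ℝ} (hw : w ∈ stdSimplex ℝ ι) (h : ∀ i, ‖u i - v i‖ ≤ C) :
    ‖∑ i, w i • u i - ∑ i, w i • v i‖ ≤ C := by
  simp_rw [← sum_sub_distrib, ← smul_sub]
  simpa using (convex_closedBall (0 : V) C).sum_mem (fun i _ ↦ hw.1 i) hw.2
    (fun i _ ↦ mem_closedBall_zero_iff.2 (h i))

theorem sum_mul_image_gradient_step_le {f : ι → E → ℝ} {f' : ι → E → E} {w : ι → ℝ} {β : ℝ}
    (hβ : 0 < β) (hw : w ∈ stdSimplex ℝ ι) (hf : ∀ i x, HasGradientAt (f i) (f' i x) x)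
    (hf' : ∀ i x y, ‖f' i x - f' i y‖ ≤ β * ‖x - y‖) (x : E) :
    ∑ i, w i * f i (x - (1 / β) • ∑ i, w i • f' i x) ≤
      ∑ i, w i * f i x - 1 / (2 * β) * ‖∑ i, w i • f' i x‖ ^ 2 :=
  image_gradient_step_le hβ (fun x ↦ hasGradientAt_sum_mul w fun i ↦ hf i x)
    (fun x y ↦ norm_sum_smul_sub_sum_smul_le hw fun i ↦ hf' i x y) x

theorem mr_gd_descent_lemma_general (l : ι → E → ℝ) (β η : ℝ) (hβ : 0 < β) (hη : 0 ≤ η)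
    (hdiff : ∀ i, Differentiable ℝ (l i))
    (hsmooth : ∀ i x y, ‖gradient (l i) x - gradient (l i) y‖ ≤ β * ‖x - y‖)
    (w : ι → ℝ) (hw : 0 < w) (θ : ℕ → E) (p : ℕ → ι → ℝ)
    (hθ : ∀ t, θ (t + 1) = θ t - (1 / β) • ∑ i, p t i • gradient (l i) (θ t))
    (hp : ∀ t, p t = expWeights η w fun i ↦ ∑ s ∈ Icc 1 t, l i (θ s)) (t : ℕ) :
    (∑ i, p (t + 1) i * l i (θ (t + 1))) - ∑ i, p t i * l i (θ t) ≤
      -(1 / (2 * β)) * ‖∑ i, p t i • gradient (l i) (θ t)‖ ^ 2 := by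
  have p_mem : p t ∈ stdSimplex ℝ ι := hp t ▸ expWeights_mem_stdSimplex hw
  have p_succ : p (t + 1) = expWeights η (p t) fun i ↦ l i (θ (t + 1)) := by
    rw [hp, hp, expWeights_expWeights hw]
    congr 1 with i
    exact sum_Icc_succ_top (Nat.le_add_left 1 t) _
  have weight_step : ∑ i, p (t + 1) i * l i (θ (t + 1)) ≤ ∑ i, p t i * l i (θ (t + 1)) :=
    p_succ ▸ sum_expWeights_mul_le hη p_mem
  have gradient_step : ∑ i, p t i * l i (θ (t + 1)) ≤
      ∑ i, p t i * l i (θ t) - 1 / (2 * β) * ‖∑ i, p t i • gradient (l i) (θ t)‖ ^ 2 :=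
    hθ t ▸ sum_mul_image_gradient_step_le hβ p_mem (fun i x ↦ (hdiff i x).hasGradientAt)
      hsmooth (θ t)
  linarith

end Gradient

/-- Descent lemma for the MR-GD iterates (Lemma 1 of the paper).
For β-smooth differentiable losses and MR-GD iterates with gradient step size
α = 1/β and MW step size η > 0, the weighted loss decreases by at least
(1/(2β)) times the squared norm of the weighted gradient. -/
theorem mr_gd_descent_lemma
    {N d : ℕ} (hN : 1 ≤ N) (hd : 1 ≤ d)
    (l : Fin N → EuclideanSpace ℝ (Fin d) → ℝ)
    (β η : ℝ) (hβ : 0 < β) (hη : 0 < η)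
    (hdiff : ∀ i, Differentiable ℝ (l i))
    (hsmooth : ∀ i, ∀ x y : EuclideanSpace ℝ (Fin d),
      ‖gradient (l i) x - gradient (l i) y‖ ≤ β * ‖x - y‖)
    (θ : ℕ → EuclideanSpace ℝ (Fin d)) (p : ℕ → Fin N → ℝ)
    (hp0 : ∀ i, p 0 i = 1 / N)
    (hθ : ∀ t, θ (t + 1) = θ t - (1 / β) • ∑ i, p t i • gradient (l i) (θ t))
    (hp : ∀ t i, p (t + 1) i =
      Real.exp (-η * ∑ s ∈ Finset.Icc 1 (t + 1), l i (θ s)) /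
        ∑ j, Real.exp (-η * ∑ s ∈ Finset.Icc 1 (t + 1), l j (θ s)))
    (t : ℕ) :
    (∑ i, p (t + 1) i * l i (θ (t + 1))) - ∑ i, p t i * l i (θ t) ≤
      -(1 / (2 * β)) * ‖∑ i, p t i • gradient (l i) (θ t)‖ ^ 2 := by
  have : NeZero N := ⟨by omega⟩
  refine mr_gd_descent_lemma_general l β η hβ hη.le hdiff hsmooth 1 zero_lt_one θ p hθ ?_ t
  rintro (_ | t) <;> ext i <;> simp [expWeights, hp0, hp]
end

section
/- Let l_1, …, l_N : ℝ^d → ℝ be differentiable and β-smooth (β > 0), let η > 0, and let (θ_t, p_t) be the MR-GD iterates with gradient step size α = 1/β. Suppose (p*, θ*) minimizes Σ_{i=1}^N p_i l_i(θ) over all probability vectors p in the N-simplex and all θ ∈ ℝ^d. Then for every T ≥ 1, (1/T) Σ_{t=0}^{T−1} ‖Σ_{i=1}^N p_{t,i} ∇l_i(θ_t)‖² ≤ (2β/T) ( (1/N) Σ_{i=1}^N l_i(θ_0) − Σ_{i=1}^N p*_i l_i(θ*) ). -/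
open Real Finset

/-! Read `L q x = ∑ i, q i * l i x` as a function on simplex × space. Both halves of an iteration
decrease `L`. With the weights frozen, `L q` has a `β`-Lipschitz gradient, so a gradient step gains
a multiple of `‖∇ (L q)‖ ^ 2`. With the point frozen, the weights are tilted by
`exp (-η * loss)`, which is an antitone function of the loss, so by Chebyshev's sum inequality the
mean loss cannot increase. Summing over time telescopes. -/

open scoped Gradient RealInnerProductSpace

section Chebyshev

lemma sum_mul_sum_le_sum_mul_sum_of_antivaryOn {ι R : Type*} [CommRing R] [LinearOrder R]
    [IsStrictOrderedRing R] {s : Finset ι} {w f g : ι → R} (hw : ∀ i ∈ s, 0 ≤ w i)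
    (hfg : AntivaryOn f g s) :
    (∑ i ∈ s, w i) * ∑ i ∈ s, w i * (f i * g i) ≤
      (∑ i ∈ s, w i * f i) * ∑ i ∈ s, w i * g i := by
  have hpairs : ∑ i ∈ s, ∑ j ∈ s, w i * w j * ((f j - f i) * (g j - g i)) ≤ 0 :=
    sum_nonpos fun i hi ↦ sum_nonpos fun j hj ↦
      mul_nonpos_of_nonneg_of_nonpos (mul_nonneg (hw i hi) (hw j hj))
        (hfg.sub_mul_sub_nonpos hi hj)
  have hexpand : ∑ i ∈ s, ∑ j ∈ s, w i * w j * ((f j - f i) * (g j - g i)) =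
      2 * ((∑ i ∈ s, w i) * ∑ i ∈ s, w i * (f i * g i) -
        (∑ i ∈ s, w i * f i) * ∑ i ∈ s, w i * g i) := by
    calc
      _ = ∑ i ∈ s, ∑ j ∈ s, (w i * (w j * (f j * g j)) + w i * (f i * g i) * w j
          - w i * f i * (w j * g j) - w i * g i * (w j * f j)) :=
        sum_congr rfl fun i _ ↦ sum_congr rfl fun j _ ↦ by ring
      _ = _ := by
        simp only [sum_add_distrib, sum_sub_distrib, ← sum_mul_sum]
        ring
  linarith

lemma antivary_exp_neg_mul {ι : Type*} {η : ℝ} (hη : 0 ≤ η) (a : ι → ℝ) :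
    Antivary (fun i ↦ exp (-η * a i)) a :=
  fun _ _ hij ↦ exp_le_exp.2 <| mul_le_mul_of_nonpos_left hij.le (neg_nonpos.2 hη)

end Chebyshev

section MultiplicativeWeights

variable {ι : Type*} [Fintype ι] {η : ℝ} {q a b : ι → ℝ}

/-- The multiplicative-weights update with step size `η`: the distribution `q` is reweighted by
`exp (-η * a i)`, where `a i` is the loss of expert `i`, and renormalized. -/
noncomputable def mwUpdate (η : ℝ) (q a : ι → ℝ) (i : ι) : ℝ :=
  q i * exp (-η * a i) / ∑ j, q j * exp (-η * a j)

lemma sum_mul_exp_pos_s2 (hq : q ∈ stdSimplex ℝ ι) (c : ι → ℝ) : 0 < ∑ i, q i * exp (c i) := by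
  have hnonneg (i : ι) : 0 ≤ q i * exp (c i) := mul_nonneg (hq.1 i) (exp_pos _).le
  refine (sum_nonneg fun i _ ↦ hnonneg i).lt_of_ne' fun hzero ↦ ?_
  have hq_zero (i : ι) : q i = 0 := by
    simpa using (sum_eq_zero_iff_of_nonneg fun i _ ↦ hnonneg i).1 hzero i (mem_univ i)
  simpa [hq_zero] using hq.2

lemma mwUpdate_mem_stdSimplex (hq : q ∈ stdSimplex ℝ ι) : mwUpdate η q a ∈ stdSimplex ℝ ι := by
  have hZ := sum_mul_exp_pos_s2 hq fun i ↦ -η * a i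
  refine ⟨fun i ↦ div_nonneg (mul_nonneg (hq.1 i) (exp_pos _).le) hZ.le, ?_⟩
  simp only [mwUpdate, ← sum_div]
  exact div_self hZ.ne'

lemma mwUpdate_zero (hq : q ∈ stdSimplex ℝ ι) : mwUpdate η q (fun _ ↦ 0) = q := by
  ext i
  simp [mwUpdate, hq.2]

lemma mwUpdate_const {c : ℝ} (hc : c ≠ 0) (i : ι) :
    mwUpdate η (fun _ ↦ c) a i = exp (-η * a i) / ∑ j, exp (-η * a j) := by
  rw [mwUpdate, ← mul_sum, mul_div_mul_left _ _ hc]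

lemma mwUpdate_add (hq : q ∈ stdSimplex ℝ ι) :
    mwUpdate η q (a + b) = mwUpdate η (mwUpdate η q a) b := by
  have hZ := (sum_mul_exp_pos_s2 hq fun i ↦ -η * a i).ne'
  ext i
  simp only [mwUpdate, Pi.add_apply, mul_add, exp_add, div_mul_eq_mul_div, ← sum_div, ← mul_assoc]
  rw [div_div_div_cancel_right₀ hZ]

lemma sum_mwUpdate_mul_le (hη : 0 ≤ η) (hq : q ∈ stdSimplex ℝ ι) :
    ∑ i, mwUpdate η q a i * a i ≤ ∑ i, q i * a i := by
  have hZ := sum_mul_exp_pos_s2 hq fun i ↦ -η * a i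
  have hchebyshev := sum_mul_sum_le_sum_mul_sum_of_antivaryOn (fun i _ ↦ hq.1 i)
    ((antivary_exp_neg_mul hη a).antivaryOn (univ : Finset ι))
  calc
    _ = (∑ i, q i * (exp (-η * a i) * a i)) / ∑ i, q i * exp (-η * a i) := by
      simp only [mwUpdate, div_mul_eq_mul_div, ← sum_div, mul_assoc]
    _ ≤ ∑ i, q i * a i := by
      rw [div_le_iff₀' hZ]
      simpa only [hq.2, one_mul] using hchebyshev

end MultiplicativeWeights

section LipschitzGradient

variable {E : Type*} [NormedAddCommGroup E] [InnerProductSpace ℝ E] [CompleteSpace E]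

/-- `β`-smoothness of `f`. The constant is a real number, not an element of `ℝ≥0` as in
`LipschitzWith`, because it enters arithmetic with real step sizes. -/
structure HasLipschitzGradient (β : ℝ) (f : E → ℝ) : Prop where
  differentiable : Differentiable ℝ f
  norm_gradient_sub_le : ∀ x y, ‖∇ f x - ∇ f y‖ ≤ β * ‖x - y‖

namespace HasLipschitzGradient

variable {β : ℝ} {f : E → ℝ}

lemma inner_gradient_add_smul_le (hf : HasLipschitzGradient β f) (x v : E) {s : ℝ} (hs : 0 ≤ s) :
    ⟪∇ f (x + s • v), v⟫ ≤ ⟪∇ f x, v⟫ + β * s * ‖v‖ ^ 2 := by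
  have hlip : ‖∇ f (x + s • v) - ∇ f x‖ ≤ β * (s * ‖v‖) := by
    simpa [norm_smul, abs_of_nonneg hs] using hf.norm_gradient_sub_le (x + s • v) x
  calc
    _ = ⟪∇ f x, v⟫ + ⟪∇ f (x + s • v) - ∇ f x, v⟫ := by rw [inner_sub_left]; ring
    _ ≤ ⟪∇ f x, v⟫ + β * (s * ‖v‖) * ‖v‖ := by
      gcongr
      exact (real_inner_le_norm _ _).trans (by gcongr)
    _ = _ := by ring

lemma apply_add_le (hf : HasLipschitzGradient β f) (x v : E) :
    f (x + v) ≤ f x + ⟪∇ f x, v⟫ + β / 2 * ‖v‖ ^ 2 := by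
  have hline (s : ℝ) : HasDerivAt (fun s : ℝ ↦ f (x + s • v)) ⟪∇ f (x + s • v), v⟫ s := by
    have hpath : HasDerivAt (fun s : ℝ ↦ x + s • v) v s := by
      simpa using ((hasDerivAt_id s).smul_const v).const_add x
    exact (hf.differentiable _).hasGradientAt.hasFDerivAt.comp_hasDerivAt s hpath
  have hparabola (s : ℝ) :
      HasDerivAt (fun s : ℝ ↦ f x + s * ⟪∇ f x, v⟫ + β / 2 * s ^ 2 * ‖v‖ ^ 2)
        (⟪∇ f x, v⟫ + β * s * ‖v‖ ^ 2) s := by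
    refine ((((hasDerivAt_id s).mul_const ⟪∇ f x, v⟫).const_add (f x)).add
      (((hasDerivAt_pow 2 s).const_mul (β / 2)).mul_const (‖v‖ ^ 2))).congr_deriv ?_
    push_cast
    ring
  have hle := image_le_of_deriv_right_le_deriv_boundary
    (fun s _ ↦ (hline s).continuousAt.continuousWithinAt)
    (fun s _ ↦ (hline s).hasDerivWithinAt) (by simp)
    (fun s _ ↦ (hparabola s).continuousAt.continuousWithinAt)
    (fun s _ ↦ (hparabola s).hasDerivWithinAt)
    (fun s hs ↦ hf.inner_gradient_add_smul_le x v hs.1) (Set.right_mem_Icc.2 zero_le_one)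
  simpa using hle

lemma apply_sub_smul_gradient_le (hf : HasLipschitzGradient β f) (α : ℝ) (x : E) :
    f (x - α • ∇ f x) ≤ f x - α * (1 - α * β / 2) * ‖∇ f x‖ ^ 2 := by
  calc
    _ ≤ f x + ⟪∇ f x, -(α • ∇ f x)⟫ + β / 2 * ‖-(α • ∇ f x)‖ ^ 2 := by
      rw [sub_eq_add_neg]
      exact hf.apply_add_le x _
    _ = _ := by
      rw [inner_neg_right, real_inner_smul_right, real_inner_self_eq_norm_sq, norm_neg, norm_smul,
        mul_pow, norm_eq_abs, sq_abs]
      ring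

end HasLipschitzGradient

end LipschitzGradient

section WeightedLoss

variable {ι E : Type*} [Fintype ι] {l : ι → E → ℝ} {q : ι → ℝ}

/-- The mixture of the losses `l i` with weights `q i`, the common objective of both players. -/
def weightedLoss (l : ι → E → ℝ) (q : ι → ℝ) (x : E) : ℝ :=
  ∑ i, q i * l i x

variable [NormedAddCommGroup E] [InnerProductSpace ℝ E] [CompleteSpace E]

lemma hasGradientAt_weightedLoss {x : E} (hl : ∀ i, DifferentiableAt ℝ (l i) x) :
    HasGradientAt (weightedLoss l q) (∑ i, q i • ∇ (l i) x) x := by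
  rw [hasGradientAt_iff_hasFDerivAt]
  refine (HasFDerivAt.fun_sum (u := univ) fun i _ ↦
    (hl i).hasGradientAt.hasFDerivAt.const_mul (q i)).congr_fderiv ?_
  simp only [map_sum, map_smul]

lemma hasLipschitzGradient_weightedLoss {β : ℝ} (hl : ∀ i, HasLipschitzGradient β (l i))
    (hq : q ∈ stdSimplex ℝ ι) : HasLipschitzGradient β (weightedLoss l q) := by
  have hgrad (x : E) := hasGradientAt_weightedLoss (q := q) fun i ↦ (hl i).differentiable x
  refine ⟨fun x ↦ (hgrad x).differentiableAt, fun x y ↦ ?_⟩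
  calc
    _ = ‖∑ i, q i • (∇ (l i) x - ∇ (l i) y)‖ := by
      simp only [(hgrad _).gradient, smul_sub, sum_sub_distrib]
    _ ≤ ∑ i, q i * (β * ‖x - y‖) := norm_sum_le_of_le _ fun i _ ↦ by
      rw [norm_smul, norm_of_nonneg (hq.1 i)]
      exact mul_le_mul_of_nonneg_left ((hl i).norm_gradient_sub_le x y) (hq.1 i)
    _ = β * ‖x - y‖ := by rw [← sum_mul, hq.2, one_mul]

end WeightedLoss

section MRGD

variable {ι E : Type*} [Fintype ι] [NormedAddCommGroup E] [InnerProductSpace ℝ E]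
  [CompleteSpace E] {l : ι → E → ℝ} {α β η m : ℝ} {θ : ℕ → E} {p : ℕ → ι → ℝ}

/-- `(θ, p)` are MR-GD iterates for the losses `l` with gradient step size `α` and
multiplicative-weights step size `η`. The weights are updated recursively, with the losses at the
new point, and may start from any distribution. -/
structure IsMRGD (l : ι → E → ℝ) (α η : ℝ) (θ : ℕ → E) (p : ℕ → ι → ℝ) : Prop where
  weights_zero_mem : p 0 ∈ stdSimplex ℝ ι
  point_succ : ∀ t, θ (t + 1) = θ t - α • ∑ i, p t i • ∇ (l i) (θ t)
  weights_succ : ∀ t, p (t + 1) = mwUpdate η (p t) fun i ↦ l i (θ (t + 1))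

namespace IsMRGD

lemma of_cumulative_loss (hp₀ : p 0 ∈ stdSimplex ℝ ι)
    (hθ : ∀ t, θ (t + 1) = θ t - α • ∑ i, p t i • ∇ (l i) (θ t))
    (hp : ∀ t, p (t + 1) = mwUpdate η (p 0) fun i ↦ ∑ s ∈ Icc 1 (t + 1), l i (θ s)) :
    IsMRGD l α η θ p := by
  refine ⟨hp₀, hθ, fun t ↦ ?_⟩
  have hp_t : p t = mwUpdate η (p 0) fun i ↦ ∑ s ∈ Icc 1 t, l i (θ s) := by
    cases t with
    | zero => simp [mwUpdate_zero hp₀]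
    | succ t => exact hp t
  rw [hp_t, ← mwUpdate_add hp₀, hp]
  congr 1 with i
  exact sum_Icc_succ_top (Nat.le_add_left 1 t) _

lemma of_uniform_weights [Nonempty ι] (hp₀ : ∀ i, p 0 i = 1 / Fintype.card ι)
    (hθ : ∀ t, θ (t + 1) = θ t - α • ∑ i, p t i • ∇ (l i) (θ t))
    (hp : ∀ t i, p (t + 1) i = exp (-η * ∑ s ∈ Icc 1 (t + 1), l i (θ s)) /
      ∑ j, exp (-η * ∑ s ∈ Icc 1 (t + 1), l j (θ s))) :
    IsMRGD l α η θ p := by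
  have hcard : (1 / Fintype.card ι : ℝ) ≠ 0 := by simp
  have huniform : p 0 = fun _ ↦ (1 / Fintype.card ι : ℝ) := funext hp₀
  refine of_cumulative_loss ?_ hθ fun t ↦ ?_
  · simp [huniform, stdSimplex]
  · ext i
    rw [huniform, mwUpdate_const hcard, hp]

lemma weights_mem (h : IsMRGD l α η θ p) (t : ℕ) : p t ∈ stdSimplex ℝ ι := by
  induction t with
  | zero => exact h.weights_zero_mem
  | succ t ih => exact h.weights_succ t ▸ mwUpdate_mem_stdSimplex ih

lemma weightedLoss_succ_le (h : IsMRGD l α η θ p) (hη : 0 ≤ η)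
    (hl : ∀ i, HasLipschitzGradient β (l i)) (t : ℕ) :
    weightedLoss l (p (t + 1)) (θ (t + 1)) ≤ weightedLoss l (p t) (θ t) -
      α * (1 - α * β / 2) * ‖∑ i, p t i • ∇ (l i) (θ t)‖ ^ 2 := by
  have hgrad := (hasGradientAt_weightedLoss (q := p t)
    fun i ↦ (hl i).differentiable (θ t)).gradient
  calc
    _ ≤ weightedLoss l (p t) (θ (t + 1)) := by
      rw [h.weights_succ]
      exact sum_mwUpdate_mul_le hη (h.weights_mem t)
    _ ≤ _ := by
      rw [h.point_succ, ← hgrad]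
      exact (hasLipschitzGradient_weightedLoss hl (h.weights_mem t)).apply_sub_smul_gradient_le
        α (θ t)

lemma mul_sum_norm_sq_gradient_le (h : IsMRGD l α η θ p) (hη : 0 ≤ η)
    (hl : ∀ i, HasLipschitzGradient β (l i)) (T : ℕ) :
    α * (1 - α * β / 2) * ∑ t ∈ range T, ‖∑ i, p t i • ∇ (l i) (θ t)‖ ^ 2 ≤
      weightedLoss l (p 0) (θ 0) - weightedLoss l (p T) (θ T) := by
  rw [mul_sum, ← sum_range_sub' fun t ↦ weightedLoss l (p t) (θ t)]
  exact sum_le_sum fun t _ ↦ le_sub_comm.1 (h.weightedLoss_succ_le hη hl t)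

end IsMRGD

theorem mr_gd_convergence_general (h : IsMRGD l α η θ p) (hα : 0 < α) (hαβ : α * β < 2)
    (hη : 0 ≤ η) (hl : ∀ i, HasLipschitzGradient β (l i))
    (hm : ∀ q ∈ stdSimplex ℝ ι, ∀ x, m ≤ weightedLoss l q x) {T : ℕ} (hT : 1 ≤ T) :
    (1 / (T : ℝ)) * ∑ t ∈ range T, ‖∑ i, p t i • ∇ (l i) (θ t)‖ ^ 2 ≤
      (weightedLoss l (p 0) (θ 0) - m) / (α * (1 - α * β / 2) * T) := by
  have hc : 0 < α * (1 - α * β / 2) := mul_pos hα (by linarith)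
  have hT_pos : (0 : ℝ) < T := by exact_mod_cast hT
  rw [le_div_iff₀ (mul_pos hc hT_pos)]
  calc
    _ = α * (1 - α * β / 2) * ∑ t ∈ range T, ‖∑ i, p t i • ∇ (l i) (θ t)‖ ^ 2 := by
      field_simp
    _ ≤ weightedLoss l (p 0) (θ 0) - weightedLoss l (p T) (θ T) :=
      h.mul_sum_norm_sq_gradient_le hη hl T
    _ ≤ weightedLoss l (p 0) (θ 0) - m := sub_le_sub_left (hm _ (h.weights_mem T) _) _

end MRGD

/-- Convergence of MR-GD (Theorem 1 of the paper).
The time average of the squared norms of the weighted gradients of the MR-GD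
iterates is bounded by (2β/T)((1/N)Σ l_i(θ_0) − Σ p*_i l_i(θ*)), where
(p*, θ*) minimizes the weighted loss over the simplex and ℝ^d. -/
theorem mr_gd_convergence
    {N d : ℕ} (hN : 1 ≤ N) (hd : 1 ≤ d)
    (l : Fin N → EuclideanSpace ℝ (Fin d) → ℝ)
    (β η : ℝ) (hβ : 0 < β) (hη : 0 < η)
    (hdiff : ∀ i, Differentiable ℝ (l i))
    (hsmooth : ∀ i, ∀ x y : EuclideanSpace ℝ (Fin d),
      ‖gradient (l i) x - gradient (l i) y‖ ≤ β * ‖x - y‖)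
    (θ : ℕ → EuclideanSpace ℝ (Fin d)) (p : ℕ → Fin N → ℝ)
    (hp0 : ∀ i, p 0 i = 1 / N)
    (hθ : ∀ t, θ (t + 1) = θ t - (1 / β) • ∑ i, p t i • gradient (l i) (θ t))
    (hp : ∀ t i, p (t + 1) i =
      Real.exp (-η * ∑ s ∈ Finset.Icc 1 (t + 1), l i (θ s)) /
        ∑ j, Real.exp (-η * ∑ s ∈ Finset.Icc 1 (t + 1), l j (θ s)))
    (pstar : Fin N → ℝ) (θstar : EuclideanSpace ℝ (Fin d))
    (hpstar_nonneg : ∀ i, 0 ≤ pstar i) (hpstar_sum : ∑ i, pstar i = 1)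
    (hmin : ∀ (q : Fin N → ℝ) (ϑ : EuclideanSpace ℝ (Fin d)),
      (∀ i, 0 ≤ q i) → (∑ i, q i = 1) →
      ∑ i, pstar i * l i θstar ≤ ∑ i, q i * l i ϑ)
    (T : ℕ) (hT : 1 ≤ T) :
    (1 / (T : ℝ)) * ∑ t ∈ Finset.range T, ‖∑ i, p t i • gradient (l i) (θ t)‖ ^ 2 ≤
      (2 * β / T) * ((1 / N) * ∑ i, l i (θ 0) - ∑ i, pstar i * l i θstar) := by
  have : Nonempty (Fin N) := ⟨⟨0, hN⟩⟩
  have hiter : IsMRGD l (1 / β) η θ p := .of_uniform_weights (by simpa using hp0) hθ hp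
  have hgain : 1 / β * (1 - 1 / β * β / 2) = 1 / (2 * β) := by field_simp; norm_num
  convert mr_gd_convergence_general hiter (one_div_pos.2 hβ) (by field_simp; norm_num) hη.le
    (fun i ↦ ⟨hdiff i, hsmooth i⟩) (fun q hq x ↦ hmin q x hq.1 hq.2) hT using 1
  simp only [weightedLoss, hp0, ← mul_sum, hgain]
  field_simp
end

section
/- Consider gradient descent on the one-dimensional clean logistic loss L(θ) = log(1 + exp(−θ)) with step size α > 0 starting from θ_0 = 0, i.e., θ_{t+1} = θ_t + α/(1 + exp(θ_t)). Then for every ε > 0 there exists a natural number t with t > −log(exp(ε) − 1) / (α exp(−ε)(exp(ε) − 1)) such that L(θ_t) = log(1 + exp(−θ_t)) ≤ ε. -/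
open Real

/-!
The slope of the logistic loss `L` is a function of its value: `-L' = 1 - exp (-L)`. Hence, as long
as the loss exceeds `ε`, every step moves the iterate to the right by at least
`α * (1 - exp (-ε)) = α * exp (-ε) * (exp ε - 1)`. The loss equals `ε` at `-log (exp ε - 1)`, and
iterates that have passed this point stay beyond it.
-/

theorem min_add_nsmul_le_of_antitone_increment {M : Type*} [AddCommMonoid M] [LinearOrder M]
    [IsOrderedAddMonoid M] {g : M → M} (hg : Antitone g) (hg_nonneg : ∀ x, 0 ≤ g x) {u : ℕ → M}
    (hu : ∀ t, u t + g (u t) ≤ u (t + 1)) (m : M) (t : ℕ) :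
    min m (u 0 + t • g m) ≤ u t := by
  induction t with
  | zero => simp
  | succ t ih =>
    rcases le_or_gt m (u t) with hm | hm
    · refine min_le_of_left_le ?_
      calc m ≤ u t := hm
        _ ≤ u t + g (u t) := le_add_of_nonneg_right (hg_nonneg (u t))
        _ ≤ u (t + 1) := hu t
    · refine min_le_of_right_le ?_
      have hlinear : u 0 + t • g m ≤ u t := (min_le_iff.mp ih).resolve_left hm.not_ge
      calc u 0 + (t + 1) • g m = u 0 + t • g m + g m := by rw [succ_nsmul, add_assoc]
        _ ≤ u t + g (u t) := add_le_add hlinear (hg hm.le)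
        _ ≤ u (t + 1) := hu t

theorem le_of_sub_div_le_of_antitone_increment {K : Type*} [Field K] [LinearOrder K]
    [IsStrictOrderedRing K] {g : K → K} (hg : Antitone g) (hg_nonneg : ∀ x, 0 ≤ g x) {u : ℕ → K}
    (hu : ∀ t, u t + g (u t) ≤ u (t + 1)) {m : K} (hm : 0 < g m) {t : ℕ}
    (ht : (m - u 0) / g m ≤ t) : m ≤ u t := by
  have hreach : m ≤ u 0 + t • g m := by
    rw [nsmul_eq_mul, ← sub_le_iff_le_add']
    exact (div_le_iff₀ hm).mp ht
  simpa only [min_eq_left hreach] using min_add_nsmul_le_of_antitone_increment hg hg_nonneg hu m t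

/-- The one-dimensional clean logistic loss `L`, whose gradient descent is studied here. -/
noncomputable def logisticLoss (x : ℝ) : ℝ :=
  log (1 + exp (-x))

theorem antitone_logisticLoss : Antitone logisticLoss := by
  intro x y hxy
  unfold logisticLoss
  gcongr

theorem logisticLoss_neg_log_exp_sub_one {ε : ℝ} (hε : 0 < ε) :
    logisticLoss (-log (exp ε - 1)) = ε := by
  have hexp : 0 < exp ε - 1 := sub_pos.mpr (one_lt_exp_iff.mpr hε)
  rw [logisticLoss, neg_neg, exp_log hexp, add_sub_cancel, log_exp]

theorem inv_one_add_exp_eq_one_sub_exp_neg_logisticLoss (x : ℝ) :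
    (1 + exp x)⁻¹ = 1 - exp (-logisticLoss x) := by
  have hpos : 0 < 1 + exp (-x) := by positivity
  rw [logisticLoss, exp_neg (log _), exp_log hpos, exp_neg]
  field_simp
  ring

theorem antitone_div_one_add_exp {α : ℝ} (hα : 0 ≤ α) :
    Antitone fun x ↦ α / (1 + exp x) := by
  intro x y hxy
  dsimp only
  gcongr

theorem div_one_add_exp_neg_log_exp_sub_one (α : ℝ) {ε : ℝ} (hε : 0 < ε) :
    α / (1 + exp (-log (exp ε - 1))) = α * exp (-ε) * (exp ε - 1) := by
  rw [div_eq_mul_inv, inv_one_add_exp_eq_one_sub_exp_neg_logisticLoss,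
    logisticLoss_neg_log_exp_sub_one hε, mul_assoc, mul_sub_one (exp (-ε)), ← exp_add,
    neg_add_cancel, exp_zero]

theorem gd_clean_logistic_general
    {α : ℝ} (hα : 0 < α) {θ : ℕ → ℝ} (hθ : ∀ t, θ (t + 1) = θ t + α / (1 + exp (θ t)))
    {ε : ℝ} (hε : 0 < ε) {t : ℕ}
    (ht : (-log (exp ε - 1) - θ 0) / (α * exp (-ε) * (exp ε - 1)) ≤ t) :
    log (1 + exp (-θ t)) ≤ ε := by
  rw [← div_one_add_exp_neg_log_exp_sub_one α hε] at ht
  have hreach : -log (exp ε - 1) ≤ θ t :=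
    le_of_sub_div_le_of_antitone_increment (antitone_div_one_add_exp hα.le)
      (fun x ↦ by positivity) (fun s ↦ (hθ s).ge) (by positivity) ht
  calc logisticLoss (θ t) ≤ logisticLoss (-log (exp ε - 1)) := antitone_logisticLoss hreach
    _ = ε := logisticLoss_neg_log_exp_sub_one hε

/-- GD on the clean 1D logistic loss L(θ) = log(1 + exp(−θ))
with step size α > 0 starting from θ₀ = 0: for every ε > 0 there is a time
t > −log(exp(ε) − 1)/(α exp(−ε)(exp(ε) − 1)) with L(θ_t) ≤ ε. -/
theorem gd_clean_logistic
    (α : ℝ) (hα : 0 < α) (θ : ℕ → ℝ)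
    (hθ0 : θ 0 = 0)
    (hθ : ∀ t, θ (t + 1) = θ t + α / (1 + Real.exp (θ t))) :
    ∀ ε > 0, ∃ t : ℕ,
      (t : ℝ) > -Real.log (Real.exp ε - 1) / (α * Real.exp (-ε) * (Real.exp ε - 1)) ∧
      Real.log (1 + Real.exp (-θ t)) ≤ ε := by
  intro ε hε
  obtain ⟨t, ht⟩ := exists_nat_gt (-log (exp ε - 1) / (α * exp (-ε) * (exp ε - 1)))
  exact ⟨t, ht, gd_clean_logistic_general hα hθ hε (by simpa only [hθ0, sub_zero] using ht.le)⟩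
end

section
/- In the noisy logistic MR-GD dynamics with step sizes η = α = 1 and θ_0 = 0, the iterates are strictly increasing: θ_{t+1} > θ_t for every t ≥ 0. -/
open Real Finset

/-!
The logistic loss satisfies `log (1 + exp x) = x + log (1 + exp (-x))`, so the two cumulative
weights have the exact ratio `a t / b t = exp (η * (θ 1 + ⋯ + θ t))`. The update at time `t` is
positive precisely when `σ * b t * exp (θ t) < (1 - σ) * a t`. As long as the iterates so far are
nonnegative and `1 ≤ η`, the exponent `θ t` is at most `θ 0 + η * (θ 1 + ⋯ + θ t)`, which reduces
this inequality to the one at time `0`; the new iterate is then larger, hence again nonnegative.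
-/

lemma log_one_add_exp_eq_add (x : ℝ) : log (1 + exp x) = x + log (1 + exp (-x)) := by
  have factor : 1 + exp x = exp x * (1 + exp (-x)) := by
    rw [mul_add, ← exp_add, add_neg_cancel, exp_zero, mul_one, add_comm]
  rw [factor, log_mul (exp_ne_zero x) (by positivity), log_exp]

lemma exp_neg_mul_sum_log_one_add_exp_neg {ι : Type*} (η : ℝ) (S : Finset ι) (θ : ι → ℝ) :
    exp (-η * ∑ s ∈ S, log (1 + exp (-θ s))) =
      exp (-η * ∑ s ∈ S, log (1 + exp (θ s))) * exp (η * ∑ s ∈ S, θ s) := by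
  simp only [log_one_add_exp_eq_add (θ _), sum_add_distrib]
  rw [← exp_add]
  ring_nf

lemma div_one_add_exp_sub_div_one_add_exp_neg_pos_iff {p q x : ℝ} :
    0 < p / (1 + exp x) - q / (1 + exp (-x)) ↔ q * exp x < p := by
  have combine : p / (1 + exp x) - q / (1 + exp (-x)) = (p - q * exp x) / (1 + exp x) := by
    rw [exp_neg]
    field_simp
    ring
  rw [combine, div_pos_iff_of_pos_right (by positivity), sub_pos]

lemma le_add_mul_sum_Icc_of_nonneg {η : ℝ} (hη : 1 ≤ η) {θ : ℕ → ℝ} {t : ℕ}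
    (hθ : ∀ s ≤ t, 0 ≤ θ s) : θ t ≤ θ 0 + η * ∑ s ∈ Icc 1 t, θ s := by
  have term_nonneg : ∀ s ∈ Icc 1 t, 0 ≤ θ s := fun s hs => hθ s (mem_Icc.mp hs).2
  obtain rfl | ht := t.eq_zero_or_pos
  · simp
  · calc
      θ t ≤ ∑ s ∈ Icc 1 t, θ s := single_le_sum term_nonneg (right_mem_Icc.mpr ht)
      _ ≤ η * ∑ s ∈ Icc 1 t, θ s := le_mul_of_one_le_left (sum_nonneg term_nonneg) hη
      _ ≤ θ 0 + η * ∑ s ∈ Icc 1 t, θ s := le_add_of_nonneg_left (hθ 0 t.zero_le)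

lemma mul_exp_lt_mul_exp_mul_sum_Icc {η σ : ℝ} (hη : 1 ≤ η) (hσ : 0 ≤ σ) {θ : ℕ → ℝ} {t : ℕ}
    (hθ : ∀ s ≤ t, 0 ≤ θ s) (hθ0 : σ * exp (θ 0) < 1 - σ) :
    σ * exp (θ t) < (1 - σ) * exp (η * ∑ s ∈ Icc 1 t, θ s) :=
  calc
    σ * exp (θ t) ≤ σ * exp (θ 0 + η * ∑ s ∈ Icc 1 t, θ s) := by
      gcongr
      exact le_add_mul_sum_Icc_of_nonneg hη hθ
    _ = σ * exp (θ 0) * exp (η * ∑ s ∈ Icc 1 t, θ s) := by rw [exp_add, mul_assoc]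
    _ < (1 - σ) * exp (η * ∑ s ∈ Icc 1 t, θ s) := by gcongr

theorem mr_gd_noisy_logistic_increasing_general {η α σ : ℝ} (hη : 1 ≤ η) (hα : 0 < α)
    (hσ : 0 ≤ σ) {θ a b : ℕ → ℝ}
    (ha : ∀ t, a t = exp (-η * ∑ s ∈ Icc 1 t, log (1 + exp (-θ s))))
    (hb : ∀ t, b t = exp (-η * ∑ s ∈ Icc 1 t, log (1 + exp (θ s))))
    (hθ0 : 0 ≤ θ 0) (hσθ0 : σ * exp (θ 0) < 1 - σ)
    (hθ : ∀ t, θ (t + 1) = θ t +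
      α * (((1 - σ) * a t / ((1 - σ) * a t + σ * b t)) / (1 + exp (θ t)) -
        (σ * b t / ((1 - σ) * a t + σ * b t)) / (1 + exp (-θ t)))) :
    StrictMono θ := by
  have a_pos (t : ℕ) : 0 < a t := ha t ▸ exp_pos _
  have b_pos (t : ℕ) : 0 < b t := hb t ▸ exp_pos _
  have weight_ratio (t : ℕ) : a t = b t * exp (η * ∑ s ∈ Icc 1 t, θ s) := by
    rw [ha, hb, exp_neg_mul_sum_log_one_add_exp_neg]
  have total_pos (t : ℕ) : 0 < (1 - σ) * a t + σ * b t :=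
    have one_sub_pos : 0 < 1 - σ := (mul_nonneg hσ (exp_pos _).le).trans_lt hσθ0
    add_pos_of_pos_of_nonneg (mul_pos one_sub_pos (a_pos t)) (mul_nonneg hσ (b_pos t).le)
  have increase (t : ℕ) (nonneg : ∀ s ≤ t, 0 ≤ θ s) : θ t < θ (t + 1) := by
    have clean_dominates : σ * b t * exp (θ t) < (1 - σ) * a t := by
      have scaled := mul_lt_mul_of_pos_left
        (mul_exp_lt_mul_exp_mul_sum_Icc hη hσ nonneg hσθ0) (b_pos t)
      rw [weight_ratio]
      linarith
    rw [hθ, lt_add_iff_pos_right, mul_pos_iff_of_pos_left hα,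
      div_one_add_exp_sub_div_one_add_exp_neg_pos_iff, div_mul_eq_mul_div]
    exact div_lt_div_of_pos_right clean_dominates (total_pos t)
  have nonneg (t : ℕ) : 0 ≤ θ t := by
    induction t using Nat.strong_induction_on with
    | _ t ih =>
      cases t with
      | zero => exact hθ0
      | succ t =>
        exact (ih t t.lt_succ_self).trans
          (increase t fun s hs => ih s (Nat.lt_succ_of_le hs)).le
  exact strictMono_nat_of_lt_succ fun t => increase t fun s _ => nonneg s

/-- In the noisy logistic MR-GD dynamics (step sizes η = α = 1,
θ₀ = 0, corruption fraction σ = 1/2 − Δ with 0 < Δ < 1/2), the iterates are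
strictly increasing: θ_{t+1} > θ_t for all t (Lemma 4 of the paper). -/
theorem mr_gd_noisy_logistic_increasing
    (Δ : ℝ) (hΔ0 : 0 < Δ) (hΔ : Δ < 1 / 2)
    (σ : ℝ) (hσ : σ = 1 / 2 - Δ)
    (N : ℕ) (hN : 1 ≤ N) (hσN : ∃ m : ℕ, 0 < m ∧ (m : ℝ) = σ * N)
    (θ a b : ℕ → ℝ)
    (ha : ∀ t, a t = Real.exp (-(1 : ℝ) * ∑ s ∈ Finset.Icc 1 t, Real.log (1 + Real.exp (-θ s))))
    (hb : ∀ t, b t = Real.exp (-(1 : ℝ) * ∑ s ∈ Finset.Icc 1 t, Real.log (1 + Real.exp (θ s))))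
    (hθ0 : θ 0 = 0)
    (hθ : ∀ t, θ (t + 1) = θ t +
      (1 : ℝ) * (((1 - σ) * a t / ((1 - σ) * a t + σ * b t)) / (1 + Real.exp (θ t)) -
        (σ * b t / ((1 - σ) * a t + σ * b t)) / (1 + Real.exp (-θ t)))) :
    ∀ t : ℕ, θ t < θ (t + 1) := fun t =>
  mr_gd_noisy_logistic_increasing_general le_rfl one_pos (by linarith) ha hb hθ0.ge
    (by rw [hθ0, exp_zero]; linarith) hθ t.lt_succ_self
end

section
/- In the noisy linear MR-LS dynamics, for every c > 0 there exists a natural number t with t > ln( ε / (c + 1 + Δ) ) / (η ε² Δ) such that |θ_t − 1| ≤ c, where θ* = 1 is the least-squares solution of the clean problem. -/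
open Real Finset

/-! Put `u t = θ t - θstar` and `a i = x i * e i`. Since `x i ^ 2 = 1`, the loss of example `i` is
`(u t - a i) ^ 2 / 2` and `u t` is the weighted mean of `a`, so the clean examples sit at `0` and
the corrupted ones at distance `ε` from it. Writing `P t` for the total weight of the corrupted
examples, we have `|u t| ≤ ε * P t`. As long as `|u s| ≤ ε * (1 / 2 - Δ)`, each corrupted example
loses at least `ε ^ 2 * Δ` more per step than each clean one. Hence corrupted weights only shrink
relative to clean ones, so `P t` never exceeds its initial value, which is at most `1 / 2 - Δ`; this
keeps the bound on `u` invariant, and then `P t` decays geometrically. -/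

section WeightedSums

variable {ι : Type*}

theorem abs_sum_mul_le_mul_sum [Fintype ι] {w a : ι → ℝ} {I : Finset ι} {ε : ℝ}
    (hw : ∀ i, 0 ≤ w i) (ha : ∀ i ∈ I, |a i| ≤ ε) (ha_compl : ∀ i ∉ I, a i = 0) :
    |∑ i, w i * a i| ≤ ε * ∑ i ∈ I, w i := by
  have hsupp : ∑ i ∈ I, w i * a i = ∑ i, w i * a i :=
    sum_subset (subset_univ I) fun i _ hi => by rw [ha_compl i hi, mul_zero]
  calc |∑ i, w i * a i| = |∑ i ∈ I, w i * a i| := by rw [hsupp]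
    _ ≤ ∑ i ∈ I, |w i * a i| := abs_sum_le_sum_abs _ _
    _ ≤ ∑ i ∈ I, ε * w i := sum_le_sum fun i hi => by
        rw [abs_mul, abs_of_nonneg (hw i), mul_comm]
        exact mul_le_mul_of_nonneg_right (ha i hi) (hw i)
    _ = ε * ∑ i ∈ I, w i := (mul_sum _ _ _).symm

theorem card_mul_sum_le_mul_card_mul_sum {w : ι → ℝ} {I J : Finset ι} {q : ℝ}
    (h : ∀ i ∈ I, ∀ j ∈ J, w i ≤ q * w j) :
    #J * ∑ i ∈ I, w i ≤ q * (#I * ∑ j ∈ J, w j) :=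
  calc #J * ∑ i ∈ I, w i = ∑ i ∈ I, ∑ _j ∈ J, w i := by
        simp only [sum_const, nsmul_eq_mul, mul_sum]
    _ ≤ ∑ _i ∈ I, ∑ j ∈ J, q * w j := sum_le_sum fun i hi => sum_le_sum (h i hi)
    _ = q * (#I * ∑ j ∈ J, w j) := by
        simp only [sum_const, nsmul_eq_mul, ← mul_sum, mul_left_comm]

variable [Fintype ι] {w : ι → ℝ} {I : Finset ι} {q : ℝ}

theorem card_sub_card_mul_sum_le (hsum : ∑ i, w i = 1) (h : ∀ i ∈ I, ∀ j ∉ I, w i ≤ q * w j) :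
    (Fintype.card ι - #I : ℝ) * ∑ i ∈ I, w i ≤ q * (#I * (1 - ∑ i ∈ I, w i)) := by
  classical
  have hcard : (#Iᶜ : ℝ) = Fintype.card ι - #I := by
    rw [card_compl, Nat.cast_sub (card_le_univ I)]
  have hcompl : ∑ j ∈ Iᶜ, w j = 1 - ∑ i ∈ I, w i := by
    rw [← hsum, ← sum_compl_add_sum I, add_sub_cancel_right]
  rw [← hcard, ← hcompl]
  exact card_mul_sum_le_mul_card_mul_sum fun i hi j hj => h i hi j (mem_compl.1 hj)

theorem card_mul_sum_le_card (hsum : ∑ i, w i = 1) (h : ∀ i ∈ I, ∀ j ∉ I, w i ≤ w j) :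
    Fintype.card ι * ∑ i ∈ I, w i ≤ #I := by
  linarith [card_sub_card_mul_sum_le (q := 1) hsum (by simpa only [one_mul] using h)]

theorem sum_le_of_two_mul_card_le [Nonempty ι] (hw : ∀ i, 0 ≤ w i) (hsum : ∑ i, w i = 1)
    (hq : 0 ≤ q) (hI : 2 * #I ≤ Fintype.card ι) (h : ∀ i ∈ I, ∀ j ∉ I, w i ≤ q * w j) :
    ∑ i ∈ I, w i ≤ q := by
  have hle : (2 * #I : ℝ) ≤ Fintype.card ι := mod_cast hI
  have hpos : (0 : ℝ) < Fintype.card ι := mod_cast Fintype.card_pos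
  have hcompl_pos : (0 : ℝ) < Fintype.card ι - #I := by linarith
  have hP0 : 0 ≤ ∑ i ∈ I, w i := sum_nonneg fun i _ => hw i
  have hP1 : ∑ i ∈ I, w i ≤ 1 :=
    hsum ▸ sum_le_sum_of_subset_of_nonneg (subset_univ I) fun i _ _ => hw i
  refine le_of_mul_le_mul_left ?_ hcompl_pos
  calc (Fintype.card ι - #I : ℝ) * ∑ i ∈ I, w i
      ≤ q * (#I * (1 - ∑ i ∈ I, w i)) := card_sub_card_mul_sum_le hsum h
    _ ≤ q * ((Fintype.card ι - #I) * 1) := by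
        gcongr
        · linarith
        · linarith
    _ = (Fintype.card ι - #I) * q := by ring

end WeightedSums

section MulWeights

variable {ι : Type*} [Fintype ι]

/-- The multiplicative-weights (Hedge) distribution with step size `η` on the examples `ι`, after
the rounds `s < t` with losses `ℓ s`. -/
noncomputable def mulWeights (η : ℝ) (ℓ : ℕ → ι → ℝ) (t : ℕ) (i : ι) : ℝ :=
  exp (-η * ∑ s ∈ range t, ℓ s i) / ∑ j, exp (-η * ∑ s ∈ range t, ℓ s j)

variable {η : ℝ} {ℓ : ℕ → ι → ℝ}

theorem mulWeights_zero (i : ι) : mulWeights η ℓ 0 i = 1 / Fintype.card ι := by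
  simp [mulWeights]

theorem mulWeights_nonneg (t : ℕ) (i : ι) : 0 ≤ mulWeights η ℓ t i := by
  unfold mulWeights
  positivity

theorem sum_mulWeights [Nonempty ι] (t : ℕ) : ∑ i, mulWeights η ℓ t i = 1 := by
  simp only [mulWeights]
  rw [← sum_div, div_self (sum_pos (fun i _ => exp_pos _) univ_nonempty).ne']

theorem mulWeights_le_exp_mul {δ : ℝ} {t : ℕ} {i j : ι} (hη : 0 ≤ η)
    (h : ∀ s < t, ℓ s j + δ ≤ ℓ s i) :
    mulWeights η ℓ t i ≤ exp (-(η * δ)) ^ t * mulWeights η ℓ t j := by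
  have hsum : ∑ s ∈ range t, ℓ s j + t * δ ≤ ∑ s ∈ range t, ℓ s i := by
    simpa [sum_add_distrib] using sum_le_sum fun s hs => h s (mem_range.1 hs)
  unfold mulWeights
  rw [← mul_div_assoc, ← exp_nat_mul, ← exp_add]
  gcongr
  linarith [mul_le_mul_of_nonneg_left hsum hη]

end MulWeights

section Trajectory

variable {ι : Type*} [Fintype ι] {η θstar ε Δ : ℝ} {x e a z : ι → ℝ} {θ u : ℕ → ℝ} {I : Finset ι}

/-- The weights of the MR-LS dynamics with features `x` and observed labels `z`: multiplicative
weights for the squared losses of the iterates `θ s`, `s < t`. -/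
noncomputable def mrlsWeights (η : ℝ) (x z : ι → ℝ) (θ : ℕ → ℝ) : ℕ → ι → ℝ :=
  mulWeights η fun s i => (1 / 2) * (θ s * x i - z i) ^ 2

theorem mrlsWeights_nonneg (t : ℕ) (i : ι) : 0 ≤ mrlsWeights η x z θ t i :=
  mulWeights_nonneg t i

theorem sum_mrlsWeights [Nonempty ι] (t : ℕ) : ∑ i, mrlsWeights η x z θ t i = 1 :=
  sum_mulWeights t

/-- `θ` is a trajectory of the linear MR-LS dynamics with features `x` and observed labels `z`.
The weights are a function of the past iterates, so they are not part of the data. The update is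
the weighted least-squares solution when `x i ^ 2 = 1`. -/
def IsMRLSTrajectory (η : ℝ) (x z : ι → ℝ) (θ : ℕ → ℝ) : Prop :=
  ∀ t, θ t = ∑ i, mrlsWeights η x z θ t i * x i * z i

namespace IsMRLSTrajectory

theorem center [Nonempty ι] (hx : ∀ i, x i ^ 2 = 1)
    (hθ : IsMRLSTrajectory η x (fun i => θstar * x i + e i) θ) :
    IsMRLSTrajectory η 1 (fun i => x i * e i) (fun t => θ t - θstar) := by
  have hweights : mrlsWeights η 1 (fun i => x i * e i) (fun t => θ t - θstar) =
      mrlsWeights η x (fun i => θstar * x i + e i) θ := by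
    unfold mrlsWeights
    congr! 3 with s i
    rw [Pi.one_apply]
    linear_combination (1 / 2) * (e i ^ 2 - (θ s - θstar) ^ 2) * hx i
  intro t
  set w := mrlsWeights η x (fun i => θstar * x i + e i) θ t
  have hsum : ∑ i, w i = 1 := sum_mrlsWeights t
  calc θ t - θstar = ∑ i, w i * x i * (θstar * x i + e i) - ∑ i, w i * θstar := by
        rw [hθ t, ← sum_mul, hsum, one_mul]
    _ = ∑ i, w i * (1 : ι → ℝ) i * (x i * e i) := by
        rw [← sum_sub_distrib]
        refine sum_congr rfl fun i _ => ?_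
        rw [Pi.one_apply]
        linear_combination w i * θstar * hx i
    _ = _ := by rw [hweights]

theorem abs_le_mul_sum_weights (hu : IsMRLSTrajectory η 1 a u) (ha : ∀ i ∈ I, |a i| = ε)
    (ha_compl : ∀ i ∉ I, a i = 0) (t : ℕ) :
    |u t| ≤ ε * ∑ i ∈ I, mrlsWeights η 1 a u t i := by
  have hmean : u t = ∑ i, mrlsWeights η 1 a u t i * a i := by
    simpa only [Pi.one_apply, mul_one] using hu t
  rw [hmean]
  exact abs_sum_mul_le_mul_sum (mrlsWeights_nonneg t) (fun i hi => (ha i hi).le) ha_compl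

end IsMRLSTrajectory

theorem half_sq_add_le_half_sub_sq {v b : ℝ} (hb : |b| = ε) (hε : 0 ≤ ε)
    (hv : |v| ≤ ε * (1 / 2 - Δ)) :
    (1 / 2) * v ^ 2 + ε ^ 2 * Δ ≤ (1 / 2) * (v - b) ^ 2 := by
  have hsq : b ^ 2 = ε ^ 2 := by rw [← sq_abs, hb]
  have hvb : v * b ≤ ε * (1 / 2 - Δ) * ε :=
    calc v * b ≤ |v| * |b| := (le_abs_self _).trans_eq (abs_mul v b)
      _ ≤ ε * (1 / 2 - Δ) * ε := by rw [hb]; gcongr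
  linarith

theorem mrlsWeights_le_exp_mul (hη : 0 ≤ η) (hε : 0 ≤ ε) (ha : ∀ i ∈ I, |a i| = ε)
    (ha_compl : ∀ i ∉ I, a i = 0) {t : ℕ} (hu : ∀ s < t, |u s| ≤ ε * (1 / 2 - Δ)) :
    ∀ i ∈ I, ∀ j ∉ I,
      mrlsWeights η 1 a u t i ≤ exp (-(η * (ε ^ 2 * Δ))) ^ t * mrlsWeights η 1 a u t j := by
  intro i hi j hj
  refine mulWeights_le_exp_mul hη fun s hs => ?_
  simpa only [Pi.one_apply, mul_one, ha_compl j hj, sub_zero] using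
    half_sq_add_le_half_sub_sq (ha i hi) hε (hu s hs)

namespace IsMRLSTrajectory

theorem abs_le_mul_half_sub [Nonempty ι] (hu : IsMRLSTrajectory η 1 a u) (hη : 0 ≤ η) (hε : 0 ≤ ε)
    (hΔ : 0 ≤ Δ) (hI : #I ≤ (1 / 2 - Δ) * Fintype.card ι) (ha : ∀ i ∈ I, |a i| = ε)
    (ha_compl : ∀ i ∉ I, a i = 0) (t : ℕ) :
    |u t| ≤ ε * (1 / 2 - Δ) := by
  induction t using Nat.strong_induction_on with
  | _ t ih =>
    have hcompare : ∀ i ∈ I, ∀ j ∉ I, mrlsWeights η 1 a u t i ≤ mrlsWeights η 1 a u t j :=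
      fun i hi j hj => (mrlsWeights_le_exp_mul hη hε ha ha_compl ih i hi j hj).trans <|
        mul_le_of_le_one_left (mrlsWeights_nonneg t j) <|
          pow_le_one₀ (exp_pos _).le (exp_le_one_iff.2 (neg_nonpos.2 (by positivity)))
    have hmass : ∑ i ∈ I, mrlsWeights η 1 a u t i ≤ 1 / 2 - Δ := by
      refine le_of_mul_le_mul_left ?_ (Nat.cast_pos.2 (Fintype.card_pos (α := ι)) : (0 : ℝ) < _)
      linarith [card_mul_sum_le_card (sum_mrlsWeights t) hcompare]
    exact (hu.abs_le_mul_sum_weights ha ha_compl t).trans (mul_le_mul_of_nonneg_left hmass hε)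

theorem abs_le_mul_exp_pow [Nonempty ι] (hu : IsMRLSTrajectory η 1 a u) (hη : 0 ≤ η) (hε : 0 ≤ ε)
    (hΔ : 0 ≤ Δ) (hI : #I ≤ (1 / 2 - Δ) * Fintype.card ι) (ha : ∀ i ∈ I, |a i| = ε)
    (ha_compl : ∀ i ∉ I, a i = 0) (t : ℕ) :
    |u t| ≤ ε * exp (-(η * (ε ^ 2 * Δ))) ^ t := by
  have hminority : 2 * #I ≤ Fintype.card ι := by
    have : (2 * #I : ℝ) ≤ Fintype.card ι := by
      linarith [mul_nonneg hΔ (Nat.cast_nonneg (α := ℝ) (Fintype.card ι))]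
    exact_mod_cast this
  have hmass : ∑ i ∈ I, mrlsWeights η 1 a u t i ≤ exp (-(η * (ε ^ 2 * Δ))) ^ t :=
    sum_le_of_two_mul_card_le (mrlsWeights_nonneg t) (sum_mrlsWeights t) (by positivity)
      hminority <|
      mrlsWeights_le_exp_mul hη hε ha ha_compl fun s _ =>
        hu.abs_le_mul_half_sub hη hε hΔ hI ha ha_compl s
  exact (hu.abs_le_mul_sum_weights ha ha_compl t).trans (mul_le_mul_of_nonneg_left hmass hε)

theorem tendsto_zero (hu : IsMRLSTrajectory η 1 a u) (hη : 0 < η) (hε : 0 < ε)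
    (hI : 2 * #I < Fintype.card ι) (ha : ∀ i ∈ I, |a i| = ε) (ha_compl : ∀ i ∉ I, a i = 0) :
    Filter.Tendsto u Filter.atTop (nhds 0) := by
  have : Nonempty ι := Fintype.card_pos_iff.1 (Nat.zero_lt_of_lt hI)
  have hcard : (2 * #I : ℝ) < Fintype.card ι := mod_cast hI
  have hpos : (0 : ℝ) < Fintype.card ι := mod_cast Fintype.card_pos
  obtain ⟨Δ, hΔ⟩ : ∃ Δ : ℝ, Δ = 1 / 2 - #I / Fintype.card ι := ⟨_, rfl⟩
  have hIΔ : (#I : ℝ) = (1 / 2 - Δ) * Fintype.card ι := by rw [hΔ]; field_simp; ring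
  have hΔ_pos : 0 < Δ := pos_of_mul_pos_left (by linarith : 0 < Δ * Fintype.card ι) hpos.le
  have hrate : exp (-(η * (ε ^ 2 * Δ))) < 1 := exp_lt_one_iff.2 (neg_lt_zero.2 (by positivity))
  refine squeeze_zero_norm (hu.abs_le_mul_exp_pow hη.le hε.le hΔ_pos.le hIΔ.le ha ha_compl) ?_
  simpa only [mul_zero] using
    (tendsto_pow_atTop_nhds_zero_of_lt_one (exp_pos _).le hrate).const_mul ε

end IsMRLSTrajectory

end Trajectory

theorem exists_natCast_gt_and_abs_sub_le {u : ℕ → ℝ} {l c : ℝ}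
    (hu : Filter.Tendsto u Filter.atTop (nhds l)) (T : ℝ) (hc : 0 < c) :
    ∃ t : ℕ, (t : ℝ) > T ∧ |u t - l| ≤ c :=
  ((tendsto_natCast_atTop_atTop.eventually_gt_atTop T).and
    (hu.eventually (Metric.closedBall_mem_nhds l hc))).exists

theorem mr_ls_converges_to_clean_solution_general {ι : Type*} [Fintype ι]
    {ε η θstar : ℝ} (hε : 0 < ε) (hη : 0 < η) {Icr : Finset ι} (hIcr : 2 * #Icr < Fintype.card ι)
    {x y e : ι → ℝ} (hx : ∀ i, x i = 1 ∨ x i = -1) (hxy : ∀ i, y i = θstar * x i)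
    (he_cr : ∀ i ∈ Icr, e i = ε ∨ e i = -ε) (he_cl : ∀ i ∉ Icr, e i = 0)
    {p : ℕ → ι → ℝ} {θ : ℕ → ℝ}
    (hp0 : ∀ i, p 0 i = 1 / Fintype.card ι)
    (hθ : ∀ t, θ t = ∑ i, p t i * x i * (y i + e i))
    (hp : ∀ t i, p (t + 1) i =
      exp (-η * ∑ s ∈ range (t + 1), (1 / 2) * (θ s * x i - (y i + e i)) ^ 2) /
        ∑ j, exp (-η * ∑ s ∈ range (t + 1), (1 / 2) * (θ s * x j - (y j + e j)) ^ 2)) :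
    Filter.Tendsto θ Filter.atTop (nhds θstar) := by
  have : Nonempty ι := Fintype.card_pos_iff.1 (Nat.zero_lt_of_lt hIcr)
  obtain rfl : y = fun i => θstar * x i := funext hxy
  have hweights : p = mrlsWeights η x (fun i => θstar * x i + e i) θ := by
    ext t i
    cases t with
    | zero => exact (hp0 i).trans (mulWeights_zero i).symm
    | succ t => exact hp t i
  have hθ_traj : IsMRLSTrajectory η x (fun i => θstar * x i + e i) θ :=
    fun t => hweights ▸ hθ t
  have hnoise : ∀ i ∈ Icr, |x i * e i| = ε := fun i hi => by
    rw [abs_mul, (abs_eq zero_le_one).2 (hx i), (abs_eq hε.le).2 (he_cr i hi), one_mul]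
  have hclean : ∀ i ∉ Icr, x i * e i = 0 := fun i hi => by rw [he_cl i hi, mul_zero]
  have hu := hθ_traj.center fun i => sq_eq_one_iff.2 (hx i)
  exact tendsto_sub_nhds_zero_iff.1 (hu.tendsto_zero hη hε hIcr hnoise hclean)

/-- In the noisy linear MR-LS dynamics, for every c > 0 there is
a time t > ln(ε/(c + 1 + Δ))/(ηε²Δ) at which |θ_t − 1| ≤ c, where θ* = 1 is
the least-squares solution of the clean problem (Theorem 4 of the paper). -/
theorem mr_ls_converges_to_clean_solution
    (N : ℕ) (hN : 1 ≤ N)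
    (ε Δ η : ℝ) (hε : 0 < ε) (hΔ0 : 0 < Δ) (hΔ : Δ < 1 / 2) (hη : 0 < η)
    (σ : ℝ) (hσ : σ = 1 / 2 - Δ)
    (Icr : Finset (Fin N)) (hIcr_pos : 0 < Icr.card) (hIcr_card : (Icr.card : ℝ) = σ * N)
    (x y e : Fin N → ℝ)
    (hx : ∀ i, x i = 1 ∨ x i = -1) (hxy : ∀ i, y i = x i)
    (he_cr : ∀ i ∈ Icr, e i = ε ∨ e i = -ε) (he_cl : ∀ i ∉ Icr, e i = 0)
    (p : ℕ → Fin N → ℝ) (θ : ℕ → ℝ)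
    (hp0 : ∀ i, p 0 i = 1 / N)
    (hθ : ∀ t, θ t = ∑ i, p t i * x i * (y i + e i))
    (hp : ∀ t i, p (t + 1) i =
      Real.exp (-η * ∑ s ∈ Finset.range (t + 1), (1 / 2) * (θ s * x i - (y i + e i)) ^ 2) /
        ∑ j, Real.exp (-η * ∑ s ∈ Finset.range (t + 1), (1 / 2) * (θ s * x j - (y j + e j)) ^ 2))
    :
    ∀ c > (0 : ℝ), ∃ t : ℕ,
      (t : ℝ) > Real.log (ε / (c + 1 + Δ)) / (η * ε ^ 2 * Δ) ∧ |θ t - 1| ≤ c := by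
  have hminority : (2 * #Icr : ℝ) < N := by
    rw [hIcr_card, hσ]
    linarith [mul_pos hΔ0 (Nat.cast_pos.2 hN : (0 : ℝ) < N)]
  have hlim : Filter.Tendsto θ Filter.atTop (nhds 1) :=
    mr_ls_converges_to_clean_solution_general hε hη
      (by rw [Fintype.card_fin]; exact_mod_cast hminority) hx (by simpa only [one_mul] using hxy)
      he_cr he_cl (by simpa only [Fintype.card_fin] using hp0) hθ hp
  exact fun c hc => exists_natCast_gt_and_abs_sub_le hlim _ hc
end

section
/- In the noisy linear MR-LS dynamics, the iterates converge to the clean solution at an exponential rate: for every t ≥ 0, |θ_t − 1| ≤ ε · exp(−η ε² Δ t) / (1 + Δ). -/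
open Real Finset

/-!
Since `xᵢ = ±1`, the squared residual of example `i` at `θ` is `(θ - xᵢ ỹᵢ)²`, so the weighted
least-squares solution is the weighted mean of the points `xᵢ ỹᵢ`: clean points equal `1`, corrupted
ones lie at distance exactly `ε` from it. While the iterates stay within `σ ε` of `1`, every step
charges a corrupted point at least `ε² (1/2 - σ)` more loss than a clean one, so the odds
corrupted : clean, initially at most `σ : 1 - σ`, shrink by `exp (-η ε² (1/2 - σ))` per step. Odds
of at most `σ : 1 - σ` keep the next iterate within `σ ε` of `1`, which closes the induction.
-/

section WeightedSums

variable {ι E : Type*} {s t : Finset ι}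

theorem norm_centerMass_sub_le [SeminormedAddCommGroup E] [NormedSpace ℝ E] {u : ι → ℝ}
    {z : ι → E} {c : E} {ε : ℝ} (hst : s ⊆ t) (hu : ∀ i ∈ s, 0 ≤ u i) (hpos : 0 < ∑ i ∈ t, u i)
    (hclean : ∀ i ∈ t, i ∉ s → z i = c) (hcorrupt : ∀ i ∈ s, ‖z i - c‖ ≤ ε) :
    ‖t.centerMass u z - c‖ ≤ ε * ((∑ i ∈ s, u i) / ∑ i ∈ t, u i) := by
  have hsum : ∑ i ∈ s, u i • (z i - c) = ∑ i ∈ t, u i • (z i - c) :=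
    sum_subset hst fun i hit his ↦ by rw [hclean i hit his, sub_self, smul_zero]
  have hsub : t.centerMass u z - c = (∑ i ∈ t, u i)⁻¹ • ∑ i ∈ s, u i • (z i - c) := by
    rw [hsum, centerMass]
    simp only [smul_sub, sum_sub_distrib, ← sum_smul]
    rw [inv_smul_smul₀ hpos.ne']
  have hnorm : ‖∑ i ∈ s, u i • (z i - c)‖ ≤ ε * ∑ i ∈ s, u i := by
    rw [mul_sum]
    refine norm_sum_le_of_le s fun i hi ↦ ?_
    rw [norm_smul, norm_of_nonneg (hu i hi), mul_comm]
    exact mul_le_mul_of_nonneg_right (hcorrupt i hi) (hu i hi)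
  rw [hsub, norm_smul, norm_inv, norm_of_nonneg hpos.le, inv_mul_eq_div, ← mul_div_assoc]
  exact div_le_div_of_nonneg_right hnorm hpos.le

theorem sum_div_sum_le_of_reweight {u w : ι → ℝ} {g r σ : ℝ} (hst : s ⊆ t) (hg : 0 ≤ g)
    (hr : 0 ≤ r) (hσ₀ : 0 ≤ σ) (hσ₁ : σ < 1) (hpos : 0 < ∑ i ∈ t, u i)
    (hw : ∑ i ∈ s, w i ≤ σ * ∑ i ∈ t, w i) (hout : ∀ i ∈ t, i ∉ s → g * w i ≤ u i)
    (hin : ∀ i ∈ s, u i ≤ g * r * w i) :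
    (∑ i ∈ s, u i) / ∑ i ∈ t, u i ≤ σ * r / (1 - σ + σ * r) := by
  classical
  have hu_in : ∑ i ∈ s, u i ≤ g * r * ∑ i ∈ s, w i := by
    rw [mul_sum]
    exact sum_le_sum hin
  have hu_out : g * ∑ i ∈ t \ s, w i ≤ ∑ i ∈ t \ s, u i := by
    rw [mul_sum]
    exact sum_le_sum fun i hi ↦ hout i (mem_sdiff.1 hi).1 (mem_sdiff.1 hi).2
  have hw_odds : (1 - σ) * ∑ i ∈ s, w i ≤ σ * ∑ i ∈ t \ s, w i := by
    rw [← sum_sdiff hst] at hw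
    linarith
  have hu_odds : (1 - σ) * ∑ i ∈ s, u i ≤ σ * r * ∑ i ∈ t \ s, u i :=
    calc (1 - σ) * ∑ i ∈ s, u i
        ≤ (1 - σ) * (g * r * ∑ i ∈ s, w i) := mul_le_mul_of_nonneg_left hu_in (by linarith)
      _ = g * r * ((1 - σ) * ∑ i ∈ s, w i) := by ring
      _ ≤ g * r * (σ * ∑ i ∈ t \ s, w i) := by gcongr
      _ = σ * r * (g * ∑ i ∈ t \ s, w i) := by ring
      _ ≤ σ * r * ∑ i ∈ t \ s, u i := by gcongr
  have hden : 0 < 1 - σ + σ * r := add_pos_of_pos_of_nonneg (by linarith) (by positivity)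
  rw [div_le_div_iff₀ hpos hden, ← sum_sdiff hst]
  linarith

end WeightedSums

section MultiplicativeWeights

variable {ι E : Type*} [SeminormedAddCommGroup E]

/-- The cumulative (halved) squared loss at the point `a` of the first `t` iterates of `m`. -/
noncomputable def cumulativeLoss (m : ℕ → E) (t : ℕ) (a : E) : ℝ :=
  ∑ s ∈ range t, 1 / 2 * ‖m s - a‖ ^ 2

/-- The unnormalized multiplicative weight of the point `z i` at time `t`, for the prior weights
`w` and the losses incurred by the iterates `m`. -/
noncomputable def mwWeight (η : ℝ) (w : ι → ℝ) (z : ι → E) (m : ℕ → E) (t : ℕ) (i : ι) : ℝ :=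
  w i * exp (-η * cumulativeLoss m t (z i))

theorem mwWeight_nonneg {η : ℝ} {w : ι → ℝ} {z : ι → E} {m : ℕ → E} {t : ℕ} {i : ι}
    (hw : 0 ≤ w i) : 0 ≤ mwWeight η w z m t i :=
  mul_nonneg hw (exp_pos _).le

theorem sum_mwWeight_pos {s : Finset ι} {η : ℝ} {w : ι → ℝ} {z : ι → E} {m : ℕ → E} {t : ℕ}
    (hw : ∀ i ∈ s, 0 ≤ w i) (hpos : 0 < ∑ i ∈ s, w i) : 0 < ∑ i ∈ s, mwWeight η w z m t i := by
  obtain ⟨i, hi, hwi⟩ := (sum_pos_iff_of_nonneg hw).1 hpos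
  exact sum_pos' (fun j hj ↦ mwWeight_nonneg (hw j hj)) ⟨i, hi, mul_pos hwi (exp_pos _)⟩

/-- The points `z` are a contamination of the constant sample `c`: those indexed by `S`, of relative
`w`-mass at most `σ`, have been moved to distance exactly `ε` from `c`. -/
structure IsContamination [Fintype ι] (w : ι → ℝ) (z : ι → E) (c : E) (ε σ : ℝ)
    (S : Finset ι) : Prop where
  weight_nonneg : ∀ i, 0 ≤ w i
  sum_weight_pos : 0 < ∑ i, w i
  mass_le : ∑ i ∈ S, w i ≤ σ * ∑ i, w i
  radius_nonneg : 0 ≤ ε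
  eq_of_notMem : ∀ i ∉ S, z i = c
  norm_sub_of_mem : ∀ i ∈ S, ‖z i - c‖ = ε

theorem IsContamination.fraction_nonneg [Fintype ι] {w : ι → ℝ} {z : ι → E} {c : E}
    {ε σ : ℝ} {S : Finset ι} (h : IsContamination w z c ε σ S) : 0 ≤ σ :=
  nonneg_of_mul_nonneg_left ((sum_nonneg fun i _ ↦ h.weight_nonneg i).trans h.mass_le)
    h.sum_weight_pos

variable [InnerProductSpace ℝ E]

theorem norm_sq_add_le_norm_sub_sq {v n : E} {σ : ℝ} (h : ‖v‖ ≤ σ * ‖n‖) :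
    ‖v‖ ^ 2 + (1 - 2 * σ) * ‖n‖ ^ 2 ≤ ‖v - n‖ ^ 2 := by
  have hinner : inner ℝ v n ≤ σ * ‖n‖ * ‖n‖ :=
    (real_inner_le_norm v n).trans (mul_le_mul_of_nonneg_right h (norm_nonneg n))
  rw [norm_sub_sq_real]
  linarith

theorem cumulativeLoss_add_le {m : ℕ → E} {t : ℕ} {a c : E} {σ : ℝ}
    (h : ∀ s < t, ‖m s - c‖ ≤ σ * ‖a - c‖) :
    cumulativeLoss m t c + ‖a - c‖ ^ 2 * (1 / 2 - σ) * t ≤ cumulativeLoss m t a := by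
  have hstep : ∀ s ∈ range t,
      1 / 2 * ‖m s - c‖ ^ 2 + ‖a - c‖ ^ 2 * (1 / 2 - σ) ≤ 1 / 2 * ‖m s - a‖ ^ 2 := by
    intro s hs
    have hgap := norm_sq_add_le_norm_sub_sq (h s (mem_range.1 hs))
    rw [sub_sub_sub_cancel_right] at hgap
    linarith
  have hsum := sum_le_sum hstep
  rw [sum_add_distrib, sum_const, card_range, nsmul_eq_mul] at hsum
  simp only [cumulativeLoss]
  linarith

theorem mwWeight_le {η σ : ℝ} {w : ι → ℝ} {z : ι → E} {m : ℕ → E} {t : ℕ} {i : ι} {c : E}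
    (hη : 0 ≤ η) (hw : 0 ≤ w i) (h : ∀ s < t, ‖m s - c‖ ≤ σ * ‖z i - c‖) :
    mwWeight η w z m t i ≤
      exp (-η * cumulativeLoss m t c) * exp (-η * ‖z i - c‖ ^ 2 * (1 / 2 - σ) * t) * w i := by
  rw [mwWeight, mul_comm, ← exp_add]
  gcongr
  linarith [mul_le_mul_of_nonneg_left (cumulativeLoss_add_le h) hη]

variable [Fintype ι]

/-- `m` is the multiplicative-weights mean of the points `z`: each iterate is their mean with
respect to the current weights, which start at `w` and are then updated, with step size `η`, by the
squared distances to the iterates. -/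
def IsMWMean (η : ℝ) (w : ι → ℝ) (z : ι → E) (m : ℕ → E) : Prop :=
  ∀ t, m t = univ.centerMass (mwWeight η w z m t) z

variable {η ε σ : ℝ} {w : ι → ℝ} {z : ι → E} {c : E} {S : Finset ι} {m : ℕ → E}

namespace IsMWMean

theorem norm_sub_le_of_forall_lt (hm : IsMWMean η w z m) (hz : IsContamination w z c ε σ S)
    (hη : 0 ≤ η) (hσ : σ < 1) {t : ℕ} (hlt : ∀ s < t, ‖m s - c‖ ≤ ε * σ) :
    ‖m t - c‖ ≤ ε * (σ * exp (-η * ε ^ 2 * (1 / 2 - σ) * t) /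
      (1 - σ + σ * exp (-η * ε ^ 2 * (1 / 2 - σ) * t))) := by
  have hpos : 0 < ∑ i, mwWeight η w z m t i :=
    sum_mwWeight_pos (fun i _ ↦ hz.weight_nonneg i) hz.sum_weight_pos
  have hclean : ∀ i ∉ S, exp (-η * cumulativeLoss m t c) * w i ≤ mwWeight η w z m t i := by
    intro i hi
    rw [mwWeight, hz.eq_of_notMem i hi, mul_comm]
  have hcorrupt : ∀ i ∈ S, mwWeight η w z m t i ≤
      exp (-η * cumulativeLoss m t c) * exp (-η * ε ^ 2 * (1 / 2 - σ) * t) * w i := by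
    intro i hi
    have hi_norm := hz.norm_sub_of_mem i hi
    rw [← hi_norm]
    exact mwWeight_le hη (hz.weight_nonneg i) fun s hs ↦
      (hlt s hs).trans_eq (by rw [hi_norm, mul_comm])
  have hdist := norm_centerMass_sub_le (subset_univ S)
    (fun i _ ↦ mwWeight_nonneg (hz.weight_nonneg i)) hpos (fun i _ ↦ hz.eq_of_notMem i)
    fun i hi ↦ (hz.norm_sub_of_mem i hi).le
  rw [← hm t] at hdist
  exact hdist.trans <| mul_le_mul_of_nonneg_left
    (sum_div_sum_le_of_reweight (subset_univ S) (exp_pos _).le (exp_pos _).le hz.fraction_nonneg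
      hσ hpos hz.mass_le (fun i _ ↦ hclean i) hcorrupt) hz.radius_nonneg

theorem norm_sub_le (hm : IsMWMean η w z m) (hz : IsContamination w z c ε σ S) (hη : 0 ≤ η)
    (hσ : σ ≤ 1 / 2) (t : ℕ) : ‖m t - c‖ ≤ ε * σ := by
  induction t using Nat.strong_induction_on with
  | _ t ih =>
    have hσ₀ := hz.fraction_nonneg
    have hr : exp (-η * ε ^ 2 * (1 / 2 - σ) * t) ≤ 1 := by
      simp only [exp_le_one_iff, neg_mul, neg_nonpos]
      exact mul_nonneg (mul_nonneg (by positivity) (sub_nonneg.2 hσ)) t.cast_nonneg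
    have hdist := hm.norm_sub_le_of_forall_lt hz hη (by linarith) ih
    set r := exp (-η * ε ^ 2 * (1 / 2 - σ) * t)
    have hden : 0 < 1 - σ + σ * r := add_pos_of_pos_of_nonneg (by linarith) (by positivity)
    have hfraction : σ * r / (1 - σ + σ * r) ≤ σ := by
      rw [div_le_iff₀ hden]
      refine mul_le_mul_of_nonneg_left ?_ hσ₀
      linarith [mul_nonneg (sub_nonneg.2 hr) (show 0 ≤ 1 - σ by linarith)]
    exact hdist.trans (mul_le_mul_of_nonneg_left hfraction hz.radius_nonneg)

end IsMWMean

theorem mr_ls_exponential_rate_general {Δ : ℝ} (hm : IsMWMean η w z m)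
    (hz : IsContamination w z c ε (1 / 2 - Δ) S) (hΔ : 0 ≤ Δ) (hη : 0 ≤ η) (t : ℕ) :
    ‖m t - c‖ ≤ ε * exp (-η * ε ^ 2 * Δ * t) / (1 + Δ) := by
  have hσ₀ := hz.fraction_nonneg
  have hdist := hm.norm_sub_le_of_forall_lt hz hη (by linarith) (t := t) fun s _ ↦
    hm.norm_sub_le hz hη (by linarith) s
  rw [sub_sub_cancel] at hdist
  set r := exp (-η * ε ^ 2 * Δ * t)
  have hσr : 0 ≤ (1 / 2 - Δ) * r := by positivity
  have hfraction : (1 / 2 - Δ) * r / (1 - (1 / 2 - Δ) + (1 / 2 - Δ) * r) ≤ r / (1 + Δ) := by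
    rw [div_le_div_iff₀ (by linarith) (by linarith), mul_right_comm, mul_comm _ r]
    refine mul_le_mul_of_nonneg_left ?_ (exp_pos _).le
    linarith [sq_nonneg Δ]
  rw [mul_div_assoc ε]
  exact hdist.trans (mul_le_mul_of_nonneg_left hfraction hz.radius_nonneg)

end MultiplicativeWeights

section SignedRegression

variable {ι : Type*} {x y : ι → ℝ}

theorem sq_mul_sub_eq_sq_sub_mul {a : ℝ} (ha : a = 1 ∨ a = -1) (θ b : ℝ) :
    (θ * a - b) ^ 2 = (θ - a * b) ^ 2 := by
  rcases ha with rfl | rfl <;> ring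

theorem isMWMean_of_weightedLeastSquares [Fintype ι] {η : ℝ} {p : ℕ → ι → ℝ} {θ : ℕ → ℝ}
    (hx : ∀ i, x i = 1 ∨ x i = -1) (hp₀ : ∀ i, p 0 i = 1 / Fintype.card ι)
    (hθ : ∀ t, θ t = ∑ i, p t i * x i * y i)
    (hp : ∀ t i, p (t + 1) i =
      exp (-η * ∑ s ∈ range (t + 1), 1 / 2 * (θ s * x i - y i) ^ 2) /
        ∑ j, exp (-η * ∑ s ∈ range (t + 1), 1 / 2 * (θ s * x j - y j) ^ 2)) :
    IsMWMean η (fun _ ↦ 1) (fun i ↦ x i * y i) θ := by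
  have hloss : ∀ t i, mwWeight η (fun _ ↦ 1) (fun i ↦ x i * y i) θ t i =
      exp (-η * ∑ s ∈ range t, 1 / 2 * (θ s * x i - y i) ^ 2) := by
    intro t i
    simp only [mwWeight, cumulativeLoss, one_mul, norm_eq_abs, sq_abs,
      sq_mul_sub_eq_sq_sub_mul (hx i)]
  have hweight : ∀ t i, p t i = mwWeight η (fun _ ↦ 1) (fun i ↦ x i * y i) θ t i /
      ∑ j, mwWeight η (fun _ ↦ 1) (fun i ↦ x i * y i) θ t j := by
    intro t i
    simp only [hloss]
    cases t with
    | zero => simp [hp₀]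
    | succ t => exact hp t i
  intro t
  rw [hθ, centerMass, smul_sum]
  refine sum_congr rfl fun i _ ↦ ?_
  rw [hweight, smul_eq_mul, smul_eq_mul]
  ring

theorem isContamination_of_signed_noise [Fintype ι] [Nonempty ι] {e : ι → ℝ} {ε σ : ℝ}
    {S : Finset ι} (hε : 0 ≤ ε) (hS : (#S : ℝ) ≤ σ * Fintype.card ι)
    (hx : ∀ i, x i = 1 ∨ x i = -1) (he_mem : ∀ i ∈ S, e i = ε ∨ e i = -ε)
    (he_notMem : ∀ i ∉ S, e i = 0) :
    IsContamination (fun _ ↦ 1) (fun i ↦ x i * (x i + e i)) 1 ε σ S where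
  weight_nonneg _ := zero_le_one
  sum_weight_pos := by simp [Fintype.card_pos]
  mass_le := by simpa using hS
  radius_nonneg := hε
  eq_of_notMem i hi := by
    rw [he_notMem i hi, add_zero, mul_self_eq_one_iff]
    exact hx i
  norm_sub_of_mem i hi := by
    rw [mul_add, mul_self_eq_one_iff.2 (hx i), add_sub_cancel_left, norm_mul,
      norm_eq_abs (x i), (abs_eq zero_le_one).2 (hx i), one_mul]
    exact (abs_eq hε).2 (he_mem i hi)

end SignedRegression

/-- In the noisy linear MR-LS dynamics the iterates converge to
the clean solution θ* = 1 at an exponential rate: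
|θ_t − 1| ≤ ε·exp(−ηε²Δt)/(1 + Δ) for every t. -/
theorem mr_ls_exponential_rate
    (N : ℕ) (hN : 1 ≤ N)
    (ε Δ η : ℝ) (hε : 0 < ε) (hΔ0 : 0 < Δ) (hΔ : Δ < 1 / 2) (hη : 0 < η)
    (σ : ℝ) (hσ : σ = 1 / 2 - Δ)
    (Icr : Finset (Fin N)) (hIcr_pos : 0 < Icr.card) (hIcr_card : (Icr.card : ℝ) = σ * N)
    (x y e : Fin N → ℝ)
    (hx : ∀ i, x i = 1 ∨ x i = -1) (hxy : ∀ i, y i = x i)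
    (he_cr : ∀ i ∈ Icr, e i = ε ∨ e i = -ε) (he_cl : ∀ i ∉ Icr, e i = 0)
    (p : ℕ → Fin N → ℝ) (θ : ℕ → ℝ)
    (hp0 : ∀ i, p 0 i = 1 / N)
    (hθ : ∀ t, θ t = ∑ i, p t i * x i * (y i + e i))
    (hp : ∀ t i, p (t + 1) i =
      Real.exp (-η * ∑ s ∈ Finset.range (t + 1), (1 / 2) * (θ s * x i - (y i + e i)) ^ 2) /
        ∑ j, Real.exp (-η * ∑ s ∈ Finset.range (t + 1), (1 / 2) * (θ s * x j - (y j + e j)) ^ 2))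
    :
    ∀ t : ℕ, |θ t - 1| ≤ ε * Real.exp (-η * ε ^ 2 * Δ * t) / (1 + Δ) := by
  obtain rfl : y = x := funext hxy
  have : Nonempty (Fin N) := ⟨⟨0, hN⟩⟩
  have hcard : (#Icr : ℝ) ≤ (1 / 2 - Δ) * Fintype.card (Fin N) := by
    rw [hIcr_card, hσ, Fintype.card_fin]
  exact mr_ls_exponential_rate_general
    (isMWMean_of_weightedLeastSquares hx (by simpa using hp0) hθ hp)
    (isContamination_of_signed_noise hε.le hcard hx he_cr he_cl) hΔ0.le hη.le
end
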